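/- Let (G, μ) be a weighted graph, let p ∈ [1, ∞), and let k be an integer with 1 ≤ k ≤ #V − 1. Let A_0, A_1, …, A_k be nonempty pairwise disjoint subsets of V, and set D := min_{α ≠ β} d(A_α, A_β), where d is the graph distance. Then ν_{k,p}(G, μ)^{1/p} ≤ (2 / D) · max_{α = 0, …, k} log( e · (μ(V) − ∑_{β ≠ α} μ(A_β)) / μ(A_α) ). -/

import Mathlib

open scoped BigOperators Classical

noncomputable section

/-- A weighted graph: a simple connected finite graph together with a symmetric
nonnegative weight which is positive exactly on edges. -/
structure WeightedGraph (V : Type*) [Fintype V] where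
  G : SimpleGraph V
  connected : G.Connected
  w : V → V → ℝ
  symm : ∀ x y, w x y = w y x
  nonneg : ∀ x y, 0 ≤ w x y
  pos_iff_adj : ∀ x y, 0 < w x y ↔ G.Adj x y

namespace WeightedGraph

variable {V : Type*} [Fintype V]

/-- The weight `μ(x)` of a vertex. -/
def vwt (W : WeightedGraph V) (x : V) : ℝ := ∑ y, W.w x y

/-- The weight `μ(A)` of a set of vertices. -/
def swt (W : WeightedGraph V) (A : Set V) : ℝ :=
  ∑ x ∈ Finset.univ.filter (· ∈ A), W.vwt x

/-- The weighted mean of a function. -/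
def mean (W : WeightedGraph V) (φ : V → ℝ) : ℝ :=
  (∑ x, φ x * W.vwt x) / W.swt Set.univ

/-- The `p`-energy of a function. -/
def energy (W : WeightedGraph V) (p : ℝ) (φ : V → ℝ) : ℝ :=
  ∑ x, ∑ y, |φ y - φ x| ^ p * W.w x y

/-- The `k`-th discrete `p`-Poincaré constant. -/
def nu (W : WeightedGraph V) (k : ℕ) (p : ℝ) : ℝ :=
  sInf {s | ∃ L : Submodule ℝ (V → ℝ), Module.finrank ℝ L = k ∧
    (∀ φ ∈ L, (∃ c : ℝ, ∀ x, φ x = c) → φ = 0) ∧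
    s = sSup {r | ∃ φ ∈ L, φ ≠ 0 ∧
      r = W.energy p φ / (2 * ∑ x, |φ x - W.mean φ| ^ p * W.vwt x)}}

/-- The `k`-th discrete modified `p`-Poincaré constant. -/
def nuHat (W : WeightedGraph V) (k : ℕ) (p : ℝ) : ℝ :=
  sInf {s | ∃ L : Submodule ℝ (V → ℝ), Module.finrank ℝ L = k + 1 ∧
    s = sSup {r | ∃ φ ∈ L, φ ≠ 0 ∧
      r = W.energy p φ / (2 * ∑ x, |φ x| ^ p * W.vwt x)}}

/-- The vertex boundary of a set of vertices. -/
def vbdry (W : WeightedGraph V) (Ω : Set V) : Set V :=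
  {x ∈ Ω | ∃ y ∉ Ω, 0 < W.w x y}

/-- The `k`-th discrete Dirichlet `p`-Poincaré constant of `Ω`; functions on `Ω`
vanishing on the vertex boundary are modelled as functions on `V` vanishing
outside `Ω \ ∂ᵥΩ`. -/
def nuD (W : WeightedGraph V) (Ω : Set V) (k : ℕ) (p : ℝ) : ℝ :=
  sInf {s | ∃ L : Submodule ℝ (V → ℝ), Module.finrank ℝ L = k ∧
    (∀ φ ∈ L, ∀ x, x ∉ Ω \ W.vbdry Ω → φ x = 0) ∧
    s = sSup {r | ∃ φ ∈ L, φ ≠ 0 ∧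
      r = (∑ x ∈ Finset.univ.filter (· ∈ Ω), ∑ y ∈ Finset.univ.filter (· ∈ Ω),
            |φ y - φ x| ^ p * W.w x y) /
          (2 * ∑ x ∈ Finset.univ.filter (· ∈ Ω), |φ x| ^ p * W.vwt x)}}

/-- The closed `r`-neighborhood of a set of vertices w.r.t. the graph distance. -/
def ball (W : WeightedGraph V) (A : Set V) (r : ℝ) : Set V :=
  {x | ∃ a ∈ A, (W.G.dist x a : ℝ) ≤ r}

/-- The graph distance between two sets of vertices. -/
def setDist (W : WeightedGraph V) (A B : Set V) : ℕ :=
  sInf {n : ℕ | ∃ a ∈ A, ∃ b ∈ B, W.G.dist a b = n}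

end WeightedGraph

/-!
Let the profile be `0` for `t ≤ 0`, `t` on `[0, 1]` and `exp (t - 1)` beyond. With `D` the minimal
distance, its values at `c (D - 2 d(x, A_α))` define functions of `x` with disjoint supports, so the
`p`-norms of their linear combinations split, and they span a space of dimension `k + 1`, which
contains a `k`-dimensional space of functions of mean zero. An edge changes `D - 2 d(x, A_α)` by at
most `2`, and the trapezoidal rule for the convex function `exp` bounds the increment of the profile
over it; hence the `p`-energy of a combination is at most `(2c)^p` times the `p`-th power sum of its
slopes. Slope and profile agree beyond `1` and the slope is at most `1` before, so the slopes exceed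
the values by at most the mass of the vertices with `2 d(x, A_α) ≤ D`, which all lie outside the
other `A_β`. The value `exp (c D - 1)` on `A_α` makes up for this excess as soon as
`c D ≥ log (e (μ(V) - ∑_{β ≠ α} μ(A_β)) / μ(A_α))`, and then the Rayleigh quotients are at most
`(2c)^p`.
-/

theorem exists_submodule_le_inf_ker_finrank_eq {K M : Type*} [Field K] [AddCommGroup M]
    [Module K M] (L : Submodule K M) (f : M →ₗ[K] K) {k : ℕ} (hk : k < Module.finrank K L) :
    ∃ L' ≤ L ⊓ LinearMap.ker f, Module.finrank K L' = k := by
  have : FiniteDimensional K L := Module.finite_of_finrank_pos (by omega)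
  have hker : k ≤ Module.finrank K (LinearMap.ker (f.domRestrict L)) := by
    have hrange : Module.finrank K (LinearMap.range (f.domRestrict L)) ≤ 1 :=
      (Submodule.finrank_le _).trans_eq (Module.finrank_self K)
    have := (f.domRestrict L).finrank_range_add_finrank_ker
    omega
  obtain ⟨v, hv⟩ := exists_linearIndependent_of_le_finrank hker
  have hv' : LinearIndependent K fun i => ((v i : L) : M) :=
    (hv.map' _ (Submodule.ker_subtype _)).map' _ (Submodule.ker_subtype _)
  refine ⟨Submodule.span K (Set.range fun i => ((v i : L) : M)), ?_, ?_⟩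
  · rw [Submodule.span_le]
    rintro _ ⟨i, rfl⟩
    exact ⟨(v i : L).2, (v i).2⟩
  · rw [finrank_span_eq_card hv', Fintype.card_fin]

theorem exp_sub_exp_le_half_mul_add {s t : ℝ} (hst : s ≤ t) :
    Real.exp t - Real.exp s ≤ (t - s) / 2 * (Real.exp t + Real.exp s) := by
  have hlog := Real.le_log_one_add_of_nonneg (sub_nonneg.2 (Real.one_le_exp (sub_nonneg.2 hst)))
  rw [add_sub_cancel, Real.log_exp, div_le_iff₀ (by linarith [Real.exp_pos (t - s)])] at hlog
  have hexp : Real.exp t = Real.exp (t - s) * Real.exp s := by rw [← Real.exp_add, sub_add_cancel]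
  rw [hexp]
  nlinarith [Real.exp_pos s]

theorem one_le_log_exp_one_mul_div {a b : ℝ} (hb : 0 < b) (hba : b ≤ a) :
    1 ≤ Real.log (Real.exp 1 * a / b) := by
  have ha : 0 < a := hb.trans_le hba
  rw [Real.le_log_iff_exp_le (by positivity), le_div_iff₀ hb]
  gcongr

theorem le_exp_sub_one_mul_of_log_le {a b s : ℝ} (ha : 0 < a) (hb : 0 < b)
    (h : Real.log (Real.exp 1 * a / b) ≤ s) : a ≤ Real.exp (s - 1) * b := by
  rw [Real.log_le_iff_le_exp (by positivity), div_le_iff₀ hb] at h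
  rw [Real.exp_sub, div_mul_eq_mul_div, le_div_iff₀ (Real.exp_pos 1)]
  linarith

theorem mul_add_rpow_le {c p x y : ℝ} (hp : 1 ≤ p) (hc : 0 ≤ c) (hx : 0 ≤ x) (hy : 0 ≤ y) :
    (c * (x + y)) ^ p ≤ (2 * c) ^ p / 2 * (x ^ p + y ^ p) :=
  calc (c * (x + y)) ^ p = (2 * c) ^ p * (1 / 2 * x + 1 / 2 * y) ^ p := by
        rw [← Real.mul_rpow (by positivity) (by positivity)]
        ring_nf
    _ ≤ (2 * c) ^ p * (1 / 2 * x ^ p + 1 / 2 * y ^ p) := by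
        gcongr
        exact (convexOn_rpow hp).2 hx hy (by norm_num : (0 : ℝ) ≤ 1 / 2)
          (by norm_num : (0 : ℝ) ≤ 1 / 2) (by norm_num)
    _ = (2 * c) ^ p / 2 * (x ^ p + y ^ p) := by ring

/-- The one-variable profile of the test functions: the positive part up to `1`, continued by an
exponential. -/
def profile (t : ℝ) : ℝ := if t ≤ 1 then max t 0 else Real.exp (t - 1)

/-- The slope of `profile`, with the larger one-sided value `1` at the kink `t = 0`. -/
def profileSlope (t : ℝ) : ℝ := if t < 0 then 0 else Real.exp (max (t - 1) 0)

section Profile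

variable {s t : ℝ}

theorem profile_nonneg (t : ℝ) : 0 ≤ profile t := by
  unfold profile
  split_ifs <;> positivity

theorem profileSlope_nonneg (t : ℝ) : 0 ≤ profileSlope t := by
  unfold profileSlope
  split_ifs <;> positivity

theorem profile_of_nonpos (ht : t ≤ 0) : profile t = 0 := by
  rw [profile, if_pos (by linarith), max_eq_right ht]

theorem profile_of_le_one (h0 : 0 ≤ t) (h1 : t ≤ 1) : profile t = t := by
  rw [profile, if_pos h1, max_eq_left h0]

theorem profile_of_one_le (ht : 1 ≤ t) : profile t = Real.exp (t - 1) := by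
  rcases ht.eq_or_lt with rfl | h
  · simp [profile]
  · rw [profile, if_neg h.not_ge]

theorem profileSlope_of_neg (ht : t < 0) : profileSlope t = 0 := if_pos ht

theorem profileSlope_of_le_one (h0 : 0 ≤ t) (h1 : t ≤ 1) : profileSlope t = 1 := by
  rw [profileSlope, if_neg h0.not_gt, max_eq_right (by linarith), Real.exp_zero]

theorem profileSlope_of_one_le (ht : 1 ≤ t) : profileSlope t = Real.exp (t - 1) := by
  rw [profileSlope, if_neg (by linarith), max_eq_left (by linarith)]

theorem profile_le_mul_profileSlope (ht : 0 ≤ t) : profile t ≤ t * profileSlope t := by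
  rcases le_total t 1 with h | h
  · rw [profile_of_le_one ht h, profileSlope_of_le_one ht h, mul_one]
  · rw [profile_of_one_le h, profileSlope_of_one_le h]
    exact le_mul_of_one_le_left (Real.exp_pos _).le h

theorem profileSlope_rpow_le {p : ℝ} (hp : 0 ≤ p) (t : ℝ) :
    profileSlope t ^ p ≤ profile t ^ p + 1 := by
  have hprofile := Real.rpow_nonneg (profile_nonneg t) p
  rcases le_total 1 t with h | h
  · rw [profileSlope_of_one_le h, profile_of_one_le h]
    linarith
  · have hslope : profileSlope t ≤ 1 := by
      rcases lt_or_ge t 0 with h0 | h0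
      · exact (profileSlope_of_neg h0).trans_le zero_le_one
      · exact (profileSlope_of_le_one h0 h).le
    linarith [Real.rpow_le_one (profileSlope_nonneg t) hslope hp]

theorem profile_mono : Monotone profile := by
  intro s t hst
  rcases le_total t 1 with ht | ht
  · rw [profile, profile, if_pos ht, if_pos (hst.trans ht)]
    exact max_le_max_right 0 hst
  rw [profile_of_one_le ht]
  rcases le_total s 1 with hs | hs
  · rw [profile, if_pos hs]
    exact (max_le hs zero_le_one).trans (Real.one_le_exp (by linarith))
  · rw [profile_of_one_le hs]
    gcongr

theorem profile_sub_profile_le (hs : 0 ≤ s) (hst : s ≤ t) :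
    profile t - profile s ≤ (t - s) / 2 * (profileSlope t + profileSlope s) := by
  rcases le_total t 1 with ht | ht
  · rw [profile_of_le_one hs (hst.trans ht), profile_of_le_one (hs.trans hst) ht,
      profileSlope_of_le_one hs (hst.trans ht), profileSlope_of_le_one (hs.trans hst) ht]
    linarith
  rw [profile_of_one_le ht, profileSlope_of_one_le ht]
  rcases le_total s 1 with hs1 | hs1
  · have htrapezoid := exp_sub_exp_le_half_mul_add (sub_nonneg.2 ht)
    have hone_le := Real.one_le_exp (sub_nonneg.2 ht)
    rw [profile_of_le_one hs hs1, profileSlope_of_le_one hs hs1]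
    rw [Real.exp_zero] at htrapezoid
    nlinarith
  · rw [profile_of_one_le hs1, profileSlope_of_one_le hs1]
    exact (exp_sub_exp_le_half_mul_add (sub_le_sub_right hst 1)).trans_eq (by ring)

theorem abs_profile_sub_profile_le {c : ℝ} (hc : 0 ≤ c) {m n : ℤ} (hmn : |m - n| ≤ 2) :
    |profile (c * m) - profile (c * n)| ≤
      c * (profileSlope (c * m) + profileSlope (c * n)) := by
  wlog hnm : n ≤ m generalizing m n
  · rw [abs_sub_comm, add_comm (profileSlope _)]
    exact this (by rwa [abs_sub_comm]) (by omega)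
  have hm_le : m ≤ n + 2 := by linarith [le_abs_self (m - n)]
  have hmono : c * n ≤ c * m := by gcongr
  rw [abs_of_nonneg (sub_nonneg.2 (profile_mono hmono))]
  have hslope_m := profileSlope_nonneg (c * m)
  have hslope_n := profileSlope_nonneg (c * n)
  rcases le_or_gt 0 n with hn | hn
  · have hstep : c * m - c * n ≤ 2 * c := by
      have : (m : ℝ) ≤ n + 2 := mod_cast hm_le
      nlinarith
    calc profile (c * m) - profile (c * n)
        ≤ (c * m - c * n) / 2 * (profileSlope (c * m) + profileSlope (c * n)) :=
          profile_sub_profile_le (by positivity) hmono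
      _ ≤ c * (profileSlope (c * m) + profileSlope (c * n)) := by
          gcongr
          linarith
  · have hn' : (n : ℝ) ≤ 0 := mod_cast hn.le
    rw [profile_of_nonpos (mul_nonpos_of_nonneg_of_nonpos hc hn'), sub_zero]
    rcases (show m ≤ 0 ∨ m = 1 by omega) with hm | rfl
    · have hm' : (m : ℝ) ≤ 0 := mod_cast hm
      rw [profile_of_nonpos (mul_nonpos_of_nonneg_of_nonpos hc hm')]
      positivity
    · rw [Int.cast_one, mul_one] at hslope_m ⊢
      exact (profile_le_mul_profileSlope hc).trans (by gcongr; linarith)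

end Profile

namespace WeightedGraph

variable {V : Type*} [Fintype V] (W : WeightedGraph V)

section Weight

theorem vwt_nonneg (x : V) : 0 ≤ W.vwt x := Finset.sum_nonneg fun y _ => W.nonneg x y

theorem vwt_pos [Nontrivial V] (x : V) : 0 < W.vwt x := by
  obtain ⟨y, hy⟩ := W.connected.preconnected.exists_adj_of_nontrivial x
  exact Finset.sum_pos' (fun y _ => W.nonneg x y)
    ⟨y, Finset.mem_univ y, (W.pos_iff_adj x y).2 hy⟩

theorem swt_eq_sum_indicator (A : Set V) : W.swt A = ∑ x, A.indicator W.vwt x := by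
  simp [swt, Finset.sum_filter, Set.indicator_apply]

theorem swt_pos [Nontrivial V] {A : Set V} (hA : A.Nonempty) : 0 < W.swt A := by
  obtain ⟨x, hx⟩ := hA
  exact Finset.sum_pos (fun y _ => W.vwt_pos y) ⟨x, by simpa using hx⟩

theorem swt_mono {A B : Set V} (hAB : A ⊆ B) : W.swt A ≤ W.swt B := by
  simp only [swt_eq_sum_indicator]
  exact Finset.sum_le_sum fun x _ => Set.indicator_le_indicator_of_subset hAB W.vwt_nonneg x

theorem swt_compl (A : Set V) : W.swt Aᶜ = W.swt Set.univ - W.swt A := by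
  simp only [swt_eq_sum_indicator, ← Finset.sum_sub_distrib, Set.indicator_compl,
    Set.indicator_univ, Pi.sub_apply]

theorem swt_biUnion {ι : Type*} (s : Finset ι) (A : ι → Set V)
    (hA : ∀ i ∈ s, ∀ j ∈ s, i ≠ j → Disjoint (A i) (A j)) :
    W.swt (⋃ i ∈ s, A i) = ∑ i ∈ s, W.swt (A i) := by
  simp only [swt_eq_sum_indicator, Finset.indicator_biUnion s A hA]
  exact Finset.sum_comm

theorem swt_le_swt_univ_sub_sum {ι : Type*} (s : Finset ι) {A : ι → Set V} {B : Set V}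
    (hA : ∀ i ∈ s, ∀ j ∈ s, i ≠ j → Disjoint (A i) (A j)) (hB : ∀ i ∈ s, Disjoint B (A i)) :
    W.swt B ≤ W.swt Set.univ - ∑ i ∈ s, W.swt (A i) := by
  rw [← W.swt_biUnion s A hA, ← W.swt_compl]
  exact W.swt_mono (Set.disjoint_iUnion₂_right.2 hB).subset_compl_right

end Weight

section Energy

variable (p : ℝ) (φ : V → ℝ)

theorem energy_nonneg : 0 ≤ W.energy p φ :=
  Finset.sum_nonneg fun x _ => Finset.sum_nonneg fun y _ =>
    mul_nonneg (Real.rpow_nonneg (abs_nonneg _) p) (W.nonneg x y)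

theorem sum_abs_rpow_mul_vwt_nonneg : 0 ≤ ∑ x, |φ x| ^ p * W.vwt x :=
  Finset.sum_nonneg fun x _ => mul_nonneg (Real.rpow_nonneg (abs_nonneg _) p) (W.vwt_nonneg x)

variable {p φ}

theorem energy_le_of_adj {C : ℝ} {H : V → ℝ}
    (h : ∀ x y, W.G.Adj x y → |φ y - φ x| ^ p ≤ C / 2 * (H x + H y)) :
    W.energy p φ ≤ C * ∑ x, H x * W.vwt x := by
  have hfst : ∑ x, ∑ y, H x * W.w x y = ∑ x, H x * W.vwt x := by simp only [vwt, Finset.mul_sum]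
  have hsnd : ∑ x, ∑ y, H y * W.w x y = ∑ x, H x * W.vwt x := by
    rw [Finset.sum_comm, ← hfst]
    simp only [W.symm]
  calc W.energy p φ ≤ ∑ x, ∑ y, C / 2 * (H x * W.w x y + H y * W.w x y) := by
        refine Finset.sum_le_sum fun x _ => Finset.sum_le_sum fun y _ => ?_
        rw [← add_mul, ← mul_assoc]
        rcases (W.nonneg x y).eq_or_lt with hw | hw
        · simp only [← hw, mul_zero, le_refl]
        · exact mul_le_mul_of_nonneg_right (h x y ((W.pos_iff_adj x y).1 hw)) hw.le
    _ = C / 2 * (∑ x, ∑ y, H x * W.w x y + ∑ x, ∑ y, H y * W.w x y) := by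
        simp only [mul_add, Finset.sum_add_distrib, Finset.mul_sum]
    _ = C * ∑ x, H x * W.vwt x := by rw [hfst, hsnd]; ring

end Energy

section Poincare

variable {k : ℕ} {p C : ℝ}

theorem mean_const [Nontrivial V] (c : ℝ) : W.mean (fun _ => c) = c := by
  have huniv : W.swt Set.univ = ∑ x, W.vwt x := by
    rw [swt_eq_sum_indicator, Set.indicator_univ]
  rw [mean, ← Finset.mul_sum, ← huniv, mul_div_cancel_right₀ _ (W.swt_pos Set.univ_nonempty).ne']

theorem mean_eq_zero_of_mem_ker {φ : V → ℝ}
    (hφ : φ ∈ LinearMap.ker (Fintype.linearCombination ℝ W.vwt)) : W.mean φ = 0 := by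
  have hsum : ∑ x, φ x * W.vwt x = 0 := hφ
  rw [mean, hsum, zero_div]

theorem sSup_rayleigh_nonneg (p : ℝ) (L : Submodule ℝ (V → ℝ)) :
    0 ≤ sSup {r | ∃ φ ∈ L, φ ≠ 0 ∧
      r = W.energy p φ / (2 * ∑ x, |φ x - W.mean φ| ^ p * W.vwt x)} := by
  apply Real.sSup_nonneg
  rintro _ ⟨φ, -, -, rfl⟩
  exact div_nonneg (W.energy_nonneg p φ) <|
    mul_nonneg zero_le_two (W.sum_abs_rpow_mul_vwt_nonneg p fun x => φ x - W.mean φ)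

theorem nu_nonneg (k : ℕ) (p : ℝ) : 0 ≤ W.nu k p := by
  apply Real.sInf_nonneg
  rintro _ ⟨L, -, -, rfl⟩
  exact W.sSup_rayleigh_nonneg p L

theorem nu_le_of_finrank_eq (hC : 0 ≤ C) {L : Submodule ℝ (V → ℝ)}
    (hL : Module.finrank ℝ L = k) (hconst : ∀ φ ∈ L, (∃ c : ℝ, ∀ x, φ x = c) → φ = 0)
    (h : ∀ φ ∈ L, W.energy p φ ≤ C * (2 * ∑ x, |φ x - W.mean φ| ^ p * W.vwt x)) :
    W.nu k p ≤ C := by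
  refine csInf_le_of_le ⟨0, ?_⟩ ⟨L, hL, hconst, rfl⟩ (Real.sSup_le ?_ hC)
  · rintro _ ⟨L, -, -, rfl⟩
    exact W.sSup_rayleigh_nonneg p L
  · rintro _ ⟨φ, hφ, -, rfl⟩
    exact div_le_of_le_mul₀
      (mul_nonneg zero_le_two (W.sum_abs_rpow_mul_vwt_nonneg p fun x => φ x - W.mean φ)) hC (h φ hφ)

theorem nu_le_of_lt_finrank [Nontrivial V] (hC : 0 ≤ C) {L : Submodule ℝ (V → ℝ)}
    (hL : k < Module.finrank ℝ L)
    (h : ∀ φ ∈ L, W.energy p φ ≤ C * (2 * ∑ x, |φ x| ^ p * W.vwt x)) :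
    W.nu k p ≤ C := by
  obtain ⟨L', hL', hfinrank⟩ :=
    exists_submodule_le_inf_ker_finrank_eq L (Fintype.linearCombination ℝ W.vwt) hL
  have hmean : ∀ φ ∈ L', W.mean φ = 0 := fun φ hφ => W.mean_eq_zero_of_mem_ker (hL' hφ).2
  refine W.nu_le_of_finrank_eq hC hfinrank ?_ fun φ hφ => ?_
  · rintro φ hφ ⟨c, hc⟩
    obtain rfl : φ = fun _ => c := funext hc
    have hc0 : c = 0 := by rw [← W.mean_const c, hmean _ hφ]
    exact funext fun _ => hc0
  · simpa only [hmean φ hφ, sub_zero] using h φ (hL' hφ).1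

end Poincare

section Distance

variable {W} {A B : Set V} {x y : V}

theorem setDist_le_dist (hx : x ∈ A) (hy : y ∈ B) : W.setDist A B ≤ W.G.dist x y :=
  Nat.sInf_le ⟨x, hx, y, hy, rfl⟩

theorem exists_dist_eq_setDist (hA : A.Nonempty) (hB : B.Nonempty) :
    ∃ a ∈ A, ∃ b ∈ B, W.G.dist a b = W.setDist A B := by
  obtain ⟨a, ha⟩ := hA
  obtain ⟨b, hb⟩ := hB
  exact Nat.sInf_mem (s := {n | ∃ a ∈ A, ∃ b ∈ B, W.G.dist a b = n}) ⟨_, a, ha, b, hb, rfl⟩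

theorem setDist_pos_iff_disjoint (hA : A.Nonempty) (hB : B.Nonempty) :
    0 < W.setDist A B ↔ Disjoint A B := by
  constructor
  · intro hpos
    rw [Set.disjoint_left]
    intro x hxA hxB
    have hle := setDist_le_dist (W := W) hxA hxB
    rw [SimpleGraph.dist_self] at hle
    omega
  · intro hdisj
    obtain ⟨a, ha, b, hb, hab⟩ := exists_dist_eq_setDist (W := W) hA hB
    rw [← hab]
    exact W.connected.pos_dist_of_ne (hdisj.ne_of_mem ha hb)

theorem exists_mem_dist_eq_setDist_singleton (hA : A.Nonempty) (x : V) :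
    ∃ a ∈ A, W.G.dist x a = W.setDist {x} A := by
  obtain ⟨_, rfl, a, ha, h⟩ := exists_dist_eq_setDist (W := W) (Set.singleton_nonempty x) hA
  exact ⟨a, ha, h⟩

theorem setDist_singleton_of_mem (hx : x ∈ A) : W.setDist {x} A = 0 := by
  simpa using setDist_le_dist (W := W) (Set.mem_singleton x) hx

theorem setDist_singleton_le_of_adj (hA : A.Nonempty) (hxy : W.G.Adj x y) :
    W.setDist {x} A ≤ W.setDist {y} A + 1 := by
  obtain ⟨a, ha, hya⟩ := exists_mem_dist_eq_setDist_singleton (W := W) hA y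
  calc W.setDist {x} A ≤ W.G.dist x a := setDist_le_dist (Set.mem_singleton x) ha
    _ ≤ W.G.dist x y + W.G.dist y a := W.connected.dist_triangle
    _ = W.setDist {y} A + 1 := by rw [SimpleGraph.dist_eq_one_iff_adj.2 hxy, hya, add_comm]

theorem setDist_le_add (hA : A.Nonempty) (hB : B.Nonempty) (x : V) :
    W.setDist A B ≤ W.setDist {x} A + W.setDist {x} B := by
  obtain ⟨a, ha, hxa⟩ := exists_mem_dist_eq_setDist_singleton (W := W) hA x
  obtain ⟨b, hb, hxb⟩ := exists_mem_dist_eq_setDist_singleton (W := W) hB x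
  calc W.setDist A B ≤ W.G.dist a b := setDist_le_dist ha hb
    _ ≤ W.G.dist a x + W.G.dist x b := W.connected.dist_triangle
    _ = W.setDist {x} A + W.setDist {x} B := by rw [SimpleGraph.dist_comm, hxa, hxb]

end Distance

/-- Twice the signed depth of `x` in the neighbourhood of `A` of radius `D / 2`; the factor `2`
keeps it an integer when `D` is odd. -/
def depth (D : ℕ) (A : Set V) (x : V) : ℤ := D - 2 * W.setDist {x} A

/-- The test function attached to `A`, supported in the neighbourhood of `A` of radius `D / 2`. -/
def bump (c : ℝ) (D : ℕ) (A : Set V) (x : V) : ℝ := profile (c * W.depth D A x)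

/-- The density that controls the increments of `bump` along edges. -/
def bumpSlope (c : ℝ) (D : ℕ) (A : Set V) (x : V) : ℝ := profileSlope (c * W.depth D A x)

section Bump

variable {W} {c p : ℝ} {D : ℕ} {A B : Set V} {x y : V}

theorem depth_of_mem (hx : x ∈ A) : W.depth D A x = D := by
  simp [depth, setDist_singleton_of_mem hx]

theorem depth_add_depth_nonpos (hA : A.Nonempty) (hB : B.Nonempty) (hD : D ≤ W.setDist A B)
    (x : V) : W.depth D A x + W.depth D B x ≤ 0 := by
  have := hD.trans (setDist_le_add hA hB x)
  unfold depth
  omega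

theorem abs_depth_sub_depth_le (hA : A.Nonempty) (hxy : W.G.Adj x y) :
    |W.depth D A x - W.depth D A y| ≤ 2 := by
  have hle := setDist_singleton_le_of_adj hA hxy
  have hge := setDist_singleton_le_of_adj hA hxy.symm
  rw [abs_le]
  unfold depth
  omega

theorem bump_nonneg : 0 ≤ W.bump c D A x := profile_nonneg _

theorem bumpSlope_nonneg : 0 ≤ W.bumpSlope c D A x := profileSlope_nonneg _

theorem bump_of_depth_nonpos (hc : 0 ≤ c) (hx : W.depth D A x ≤ 0) : W.bump c D A x = 0 :=
  profile_of_nonpos (mul_nonpos_of_nonneg_of_nonpos hc (mod_cast hx))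

theorem bump_le_of_depth_eq_one (hc : 0 ≤ c) (hx : W.depth D A x = 1) :
    W.bump c D A x ≤ c * W.bumpSlope c D A x := by
  simpa [bump, bumpSlope, hx] using profile_le_mul_profileSlope hc

theorem abs_bump_sub_bump_le (hc : 0 ≤ c) (hA : A.Nonempty) (hxy : W.G.Adj x y) :
    |W.bump c D A y - W.bump c D A x| ≤ c * (W.bumpSlope c D A x + W.bumpSlope c D A y) := by
  rw [abs_sub_comm]
  exact abs_profile_sub_profile_le hc (abs_depth_sub_depth_le hA hxy)

theorem bump_of_mem (hcD : 1 ≤ c * D) (hx : x ∈ A) : W.bump c D A x = Real.exp (c * D - 1) := by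
  rw [bump, depth_of_mem hx, Int.cast_natCast, profile_of_one_le hcD]

theorem bumpSlope_rpow_le (hc : 0 < c) (hp : 0 < p) :
    W.bumpSlope c D A x ^ p ≤
      W.bump c D A x ^ p + {x | 0 ≤ W.depth D A x}.indicator 1 x := by
  by_cases hx : 0 ≤ W.depth D A x
  · rw [Set.indicator_of_mem (by exact hx)]
    exact profileSlope_rpow_le hp.le _
  · have hneg : c * (W.depth D A x : ℝ) < 0 :=
      mul_neg_of_pos_of_neg hc (mod_cast not_le.1 hx)
    rw [Set.indicator_of_notMem (by exact hx), add_zero, bumpSlope, profileSlope_of_neg hneg,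
      Real.zero_rpow hp.ne']
    exact Real.rpow_nonneg bump_nonneg p

theorem exp_mul_swt_le_sum_bump_rpow (hcD : 1 ≤ c * D) (hp : 1 ≤ p) :
    Real.exp (c * D - 1) * W.swt A ≤ ∑ x, W.bump c D A x ^ p * W.vwt x := by
  rw [swt_eq_sum_indicator, Finset.mul_sum]
  refine Finset.sum_le_sum fun x _ => ?_
  by_cases hx : x ∈ A
  · rw [Set.indicator_of_mem hx, bump_of_mem hcD hx]
    exact mul_le_mul_of_nonneg_right
      (Real.self_le_rpow_of_one_le (Real.one_le_exp (by linarith)) hp) (W.vwt_nonneg x)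
  · rw [Set.indicator_of_notMem hx, mul_zero]
    exact mul_nonneg (Real.rpow_nonneg bump_nonneg p) (W.vwt_nonneg x)

theorem sum_bumpSlope_rpow_le (hc : 0 < c) (hcD : 1 ≤ c * D) (hp : 1 ≤ p)
    (hA : W.swt {x | 0 ≤ W.depth D A x} ≤ Real.exp (c * D - 1) * W.swt A) :
    ∑ x, W.bumpSlope c D A x ^ p * W.vwt x ≤ 2 * ∑ x, W.bump c D A x ^ p * W.vwt x := by
  calc ∑ x, W.bumpSlope c D A x ^ p * W.vwt x
      ≤ ∑ x, (W.bump c D A x ^ p + {x | 0 ≤ W.depth D A x}.indicator 1 x) * W.vwt x :=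
        Finset.sum_le_sum fun x _ =>
          mul_le_mul_of_nonneg_right (bumpSlope_rpow_le hc (by linarith)) (W.vwt_nonneg x)
    _ = ∑ x, W.bump c D A x ^ p * W.vwt x + W.swt {x | 0 ≤ W.depth D A x} := by
        simp [add_mul, Finset.sum_add_distrib, swt_eq_sum_indicator, Set.indicator_apply]
    _ ≤ 2 * ∑ x, W.bump c D A x ^ p * W.vwt x := by
        linarith [hA.trans (exp_mul_swt_le_sum_bump_rpow hcD hp)]

end Bump

section SeparatedSets

variable {W} {ι : Type*} {A : ι → Set V} {c p : ℝ} {D : ℕ} {x y : V}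

theorem sum_mul_bump_eq [Fintype ι] (hc : 0 ≤ c) {α : ι}
    (hα : ∀ γ, γ ≠ α → W.depth D (A γ) x ≤ 0) (a : ι → ℝ) :
    ∑ γ, a γ * W.bump c D (A γ) x = a α * W.bump c D (A α) x :=
  Fintype.sum_eq_single α fun γ hγ => by rw [bump_of_depth_nonpos hc (hα γ hγ), mul_zero]

variable (hne : ∀ α, (A α).Nonempty)
  (hsep : ∀ α β, α ≠ β → D ≤ W.setDist (A α) (A β))

include hne hsep

theorem exists_forall_ne_depth_nonpos [Nonempty ι] (x : V) :
    ∃ α, ∀ γ, γ ≠ α → W.depth D (A γ) x ≤ 0 := by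
  by_cases h : ∃ α, 0 < W.depth D (A α) x
  · obtain ⟨α, hα⟩ := h
    refine ⟨α, fun γ hγ => ?_⟩
    linarith [depth_add_depth_nonpos (hne γ) (hne α) (hsep γ α hγ) x]
  · push Not at h
    exact ⟨Classical.arbitrary ι, fun γ _ => h γ⟩

theorem depth_eq_one_of_adj {α β : ι} (hαβ : α ≠ β) (hxy : W.G.Adj x y)
    (hx : 0 < W.depth D (A α) x) (hy : 0 < W.depth D (A β) y) : W.depth D (A α) x = 1 := by
  have hsum := depth_add_depth_nonpos (hne α) (hne β) (hsep α β hαβ) y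
  have hadj := abs_le.1 (abs_depth_sub_depth_le (D := D) (hne α) hxy)
  omega

theorem depth_le_neg_of_mem {α β : ι} (hαβ : α ≠ β) (hx : x ∈ A β) :
    W.depth D (A α) x ≤ -D := by
  have hsum := depth_add_depth_nonpos (hne α) (hne β) (hsep α β hαβ) x
  rw [depth_of_mem hx] at hsum
  omega

theorem linearIndependent_bump (hc : 0 ≤ c) (hcD : 1 ≤ c * D) :
    LinearIndependent ℝ fun α => W.bump c D (A α) := by
  rw [linearIndependent_iff']
  intro s a ha α hα
  obtain ⟨x, hx⟩ := hne α
  have heval : a α * W.bump c D (A α) x = 0 := by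
    rw [← Finset.sum_eq_single_of_mem (f := fun γ => a γ * W.bump c D (A γ) x) α hα
      fun γ _ hγ => ?_]
    · simpa using congrFun ha x
    · have hdepth := depth_le_neg_of_mem hne hsep hγ hx
      rw [bump_of_depth_nonpos hc (by omega), mul_zero]
  refine (mul_eq_zero.1 heval).resolve_right ?_
  rw [bump_of_mem hcD hx]
  exact (Real.exp_pos _).ne'

theorem disjoint_of_le_setDist (hD : 0 < D) {α β : ι} (hαβ : α ≠ β) :
    Disjoint (A α) (A β) :=
  (setDist_pos_iff_disjoint (hne α) (hne β)).1 (hD.trans_le (hsep α β hαβ))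

variable [Fintype ι]

theorem swt_depth_nonneg_le [DecidableEq ι] (hD : 0 < D) (α : ι) :
    W.swt {x | 0 ≤ W.depth D (A α) x} ≤
      W.swt Set.univ - ∑ β ∈ Finset.univ.erase α, W.swt (A β) := by
  refine W.swt_le_swt_univ_sub_sum _
    (fun β _ γ _ => disjoint_of_le_setDist hne hsep hD) fun β hβ => ?_
  rw [Set.disjoint_left]
  intro x (hx : 0 ≤ W.depth D (A α) x) hxβ
  have hdepth := depth_le_neg_of_mem hne hsep (Finset.ne_of_mem_erase hβ).symm hxβ
  omega

theorem abs_sum_bump_rpow_eq [Nonempty ι] (hc : 0 ≤ c) (hp : 0 < p) (a : ι → ℝ) (x : V) :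
    |∑ α, a α * W.bump c D (A α) x| ^ p = ∑ α, |a α| ^ p * W.bump c D (A α) x ^ p := by
  obtain ⟨α, hα⟩ := exists_forall_ne_depth_nonpos hne hsep x
  rw [sum_mul_bump_eq hc hα, Fintype.sum_eq_single α fun γ hγ => by
    rw [bump_of_depth_nonpos hc (hα γ hγ), Real.zero_rpow hp.ne', mul_zero]]
  rw [abs_mul, abs_of_nonneg bump_nonneg, Real.mul_rpow (abs_nonneg _) bump_nonneg]

theorem abs_sum_bump_sub_sum_bump_le [Nonempty ι] (hc : 0 ≤ c) {a : ι → ℝ} {M : V → ℝ}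
    (hM : ∀ α z, |a α| * W.bumpSlope c D (A α) z ≤ M z) (hxy : W.G.Adj x y) :
    |∑ α, a α * W.bump c D (A α) y - ∑ α, a α * W.bump c D (A α) x| ≤ c * (M x + M y) := by
  obtain ⟨α, hα⟩ := exists_forall_ne_depth_nonpos hne hsep x
  obtain ⟨β, hβ⟩ := exists_forall_ne_depth_nonpos hne hsep y
  have hsingle : ∀ γ, (∀ δ, δ ≠ γ → W.depth D (A δ) x ≤ 0) →
      (∀ δ, δ ≠ γ → W.depth D (A δ) y ≤ 0) →
      |∑ α, a α * W.bump c D (A α) y - ∑ α, a α * W.bump c D (A α) x| ≤ c * (M x + M y) := by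
    intro γ hx hy
    rw [sum_mul_bump_eq hc hx, sum_mul_bump_eq hc hy, ← mul_sub, abs_mul]
    calc |a γ| * |W.bump c D (A γ) y - W.bump c D (A γ) x|
        ≤ |a γ| * (c * (W.bumpSlope c D (A γ) x + W.bumpSlope c D (A γ) y)) := by
          gcongr
          exact abs_bump_sub_bump_le hc (hne γ) hxy
      _ = c * (|a γ| * W.bumpSlope c D (A γ) x + |a γ| * W.bumpSlope c D (A γ) y) := by ring
      _ ≤ c * (M x + M y) := by gcongr <;> exact hM γ _
  rcases eq_or_ne α β with rfl | hαβ
  · exact hsingle α hα hβ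
  rcases le_or_gt (W.depth D (A α) x) 0 with hx | hx
  · exact hsingle β (fun γ _ => if h : γ = α then h ▸ hx else hα γ h) hβ
  rcases le_or_gt (W.depth D (A β) y) 0 with hy | hy
  · exact hsingle α hα fun γ _ => if h : γ = β then h ▸ hy else hβ γ h
  -- The edge joins the supports of two bumps; as `D ≤ d(A α, A β)`, both ends have depth `1`.
  have hend : ∀ γ z, W.depth D (A γ) z = 1 → |a γ * W.bump c D (A γ) z| ≤ c * M z := by
    intro γ z hz
    rw [abs_mul, abs_of_nonneg bump_nonneg]
    calc |a γ| * W.bump c D (A γ) z ≤ |a γ| * (c * W.bumpSlope c D (A γ) z) := by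
          gcongr
          exact bump_le_of_depth_eq_one hc hz
      _ = c * (|a γ| * W.bumpSlope c D (A γ) z) := by ring
      _ ≤ c * M z := by gcongr; exact hM γ z
  rw [sum_mul_bump_eq hc hα, sum_mul_bump_eq hc hβ]
  have hboundx := hend α x (depth_eq_one_of_adj hne hsep hαβ hxy hx hy)
  have hboundy := hend β y (depth_eq_one_of_adj hne hsep hαβ.symm hxy.symm hy hx)
  linarith [abs_sub (a β * W.bump c D (A β) y) (a α * W.bump c D (A α) x)]

theorem abs_sum_bump_sub_sum_bump_rpow_le [Nonempty ι] (hc : 0 ≤ c) (hp : 1 ≤ p) (a : ι → ℝ)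
    (hxy : W.G.Adj x y) :
    |∑ α, a α * W.bump c D (A α) y - ∑ α, a α * W.bump c D (A α) x| ^ p ≤
      (2 * c) ^ p / 2 * (∑ α, |a α| ^ p * W.bumpSlope c D (A α) x ^ p +
        ∑ α, |a α| ^ p * W.bumpSlope c D (A α) y ^ p) := by
  have hp0 : 0 < p := by linarith
  set H : V → ℝ := fun z => ∑ α, |a α| ^ p * W.bumpSlope c D (A α) z ^ p
  have hterm : ∀ α z, 0 ≤ |a α| ^ p * W.bumpSlope c D (A α) z ^ p := fun α z =>
    mul_nonneg (Real.rpow_nonneg (abs_nonneg _) p) (Real.rpow_nonneg bumpSlope_nonneg p)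
  have hH0 : ∀ z, 0 ≤ H z := fun z => Finset.sum_nonneg fun α _ => hterm α z
  have hM : ∀ α z, |a α| * W.bumpSlope c D (A α) z ≤ H z ^ p⁻¹ := by
    intro α z
    rw [Real.le_rpow_inv_iff_of_pos (mul_nonneg (abs_nonneg _) bumpSlope_nonneg) (hH0 z) hp0,
      Real.mul_rpow (abs_nonneg _) bumpSlope_nonneg]
    exact Finset.single_le_sum (fun γ _ => hterm γ z) (Finset.mem_univ α)
  calc |∑ α, a α * W.bump c D (A α) y - ∑ α, a α * W.bump c D (A α) x| ^ p
      ≤ (c * (H x ^ p⁻¹ + H y ^ p⁻¹)) ^ p := by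
        gcongr
        exact abs_sum_bump_sub_sum_bump_le hne hsep hc hM hxy
    _ ≤ (2 * c) ^ p / 2 * ((H x ^ p⁻¹) ^ p + (H y ^ p⁻¹) ^ p) :=
        mul_add_rpow_le hp hc (Real.rpow_nonneg (hH0 x) _) (Real.rpow_nonneg (hH0 y) _)
    _ = (2 * c) ^ p / 2 * (H x + H y) := by
        rw [Real.rpow_inv_rpow (hH0 x) hp0.ne', Real.rpow_inv_rpow (hH0 y) hp0.ne']

theorem energy_sum_bump_le [Nonempty ι] (hc : 0 < c) (hcD : 1 ≤ c * D) (hp : 1 ≤ p)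
    (hA : ∀ α, W.swt {x | 0 ≤ W.depth D (A α) x} ≤ Real.exp (c * D - 1) * W.swt (A α))
    (a : ι → ℝ) :
    W.energy p (fun x => ∑ α, a α * W.bump c D (A α) x) ≤
      (2 * c) ^ p * (2 * ∑ x, |∑ α, a α * W.bump c D (A α) x| ^ p * W.vwt x) := by
  have hswap : ∀ f : ι → V → ℝ, ∑ x, (∑ α, |a α| ^ p * f α x ^ p) * W.vwt x =
      ∑ α, |a α| ^ p * ∑ x, f α x ^ p * W.vwt x := fun f => by
    simp only [Finset.sum_mul, Finset.mul_sum, mul_assoc]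
    exact Finset.sum_comm
  simp only [abs_sum_bump_rpow_eq hne hsep hc.le (by linarith : 0 < p)]
  calc W.energy p (fun x => ∑ α, a α * W.bump c D (A α) x)
      ≤ (2 * c) ^ p * ∑ x, (∑ α, |a α| ^ p * W.bumpSlope c D (A α) x ^ p) * W.vwt x :=
        W.energy_le_of_adj fun x y hxy =>
          abs_sum_bump_sub_sum_bump_rpow_le hne hsep hc.le hp a hxy
    _ ≤ (2 * c) ^ p * ∑ α, |a α| ^ p * (2 * ∑ x, W.bump c D (A α) x ^ p * W.vwt x) := by
        rw [hswap]
        gcongr with α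
        exact sum_bumpSlope_rpow_le hc hcD hp (hA α)
    _ = (2 * c) ^ p * (2 * ∑ x, (∑ α, |a α| ^ p * W.bump c D (A α) x ^ p) * W.vwt x) := by
        rw [hswap, Finset.mul_sum _ _ (2 : ℝ)]
        simp only [mul_left_comm (2 : ℝ)]

theorem nu_le_of_separated_sets [Nontrivial V] [DecidableEq ι] {k : ℕ} (hk : k < Fintype.card ι)
    (hc : 0 < c) (hcD : 1 ≤ c * D) (hp : 1 ≤ p)
    (hA : ∀ α, W.swt Set.univ - ∑ β ∈ Finset.univ.erase α, W.swt (A β) ≤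
      Real.exp (c * D - 1) * W.swt (A α)) :
    W.nu k p ≤ (2 * c) ^ p := by
  have : Nonempty ι := Fintype.card_pos_iff.1 (by omega)
  have hD : 0 < D := by
    rcases Nat.eq_zero_or_pos D with rfl | hD
    · norm_num at hcD
    · exact hD
  refine W.nu_le_of_lt_finrank (by positivity)
    (L := Submodule.span ℝ (Set.range fun α => W.bump c D (A α))) ?_ fun φ hφ => ?_
  · rwa [finrank_span_eq_card (linearIndependent_bump hne hsep hc.le hcD)]
  · obtain ⟨a, rfl⟩ := (Submodule.mem_span_range_iff_exists_fun ℝ).1 hφ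
    have hsum : ∑ α, a α • W.bump c D (A α) = fun x => ∑ α, a α * W.bump c D (A α) x := by
      ext x
      simp
    rw [hsum]
    exact energy_sum_bump_le hne hsep hc hcD hp
      (fun α => (swt_depth_nonneg_le hne hsep hD α).trans (hA α)) a

theorem nu_rpow_le_of_log_le [Nontrivial V] [DecidableEq ι] {k : ℕ} (hk : k < Fintype.card ι)
    (hD : 0 < D) (hp : 1 ≤ p) {S : ℝ}
    (hS : ∀ α, Real.log (Real.exp 1 *
      (W.swt Set.univ - ∑ β ∈ Finset.univ.erase α, W.swt (A β)) / W.swt (A α)) ≤ S) :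
    W.nu k p ^ (1 / p) ≤ 2 / D * S := by
  have hpos : ∀ α, 0 < W.swt (A α) := fun α => W.swt_pos (hne α)
  have hmass : ∀ α, W.swt (A α) ≤ W.swt Set.univ - ∑ β ∈ Finset.univ.erase α, W.swt (A β) :=
    fun α => W.swt_le_swt_univ_sub_sum _
      (fun β _ γ _ => disjoint_of_le_setDist hne hsep hD) fun β hβ =>
        disjoint_of_le_setDist hne hsep hD (Finset.ne_of_mem_erase hβ).symm
  obtain ⟨α₀⟩ : Nonempty ι := Fintype.card_pos_iff.1 (by omega)
  have hone_le : 1 ≤ S := (one_le_log_exp_one_mul_div (hpos α₀) (hmass α₀)).trans (hS α₀)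
  have hcD : S / D * D = S := div_mul_cancel₀ S (mod_cast hD.ne')
  rw [one_div, Real.rpow_inv_le_iff_of_pos (W.nu_nonneg k p) (by positivity) (by positivity),
    show 2 / D * S = 2 * (S / D) by ring]
  refine nu_le_of_separated_sets hne hsep hk (by positivity) (hone_le.trans_eq hcD.symm) hp
    fun α => ?_
  rw [hcD]
  exact le_exp_sub_one_mul_of_log_le ((hpos α).trans_le (hmass α)) (hpos α) (hS α)

end SeparatedSets

end WeightedGraph

open WeightedGraph in
/-- Theorem 8.5 (the discrete analogue of the main Theorem 1.1): for nonempty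
pairwise disjoint subsets `A_0, …, A_k ⊆ V`, with `D := min_{α ≠ β} d(A_α, A_β)`,
`ν_{k,p}(G,μ)^{1/p} ≤ (2/D) max_α log(e (μ(V) - ∑_{β ≠ α} μ(A_β)) / μ(A_α))`. -/
theorem nu_rpow_le_of_separated_sets
    {V : Type*} [Fintype V] (W : WeightedGraph V) (p : ℝ) (hp : 1 ≤ p)
    (k : ℕ) (hk₁ : 1 ≤ k) (hk₂ : k ≤ Fintype.card V - 1)
    (A : Fin (k + 1) → Set V) (hne : ∀ α, (A α).Nonempty)
    (hdisj : ∀ α β, α ≠ β → Disjoint (A α) (A β))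
    (D : ℕ) (hD : D = sInf {n : ℕ | ∃ α β, α ≠ β ∧ n = W.setDist (A α) (A β)}) :
    W.nu k p ^ (1 / p) ≤
      (2 / (D : ℝ)) * ⨆ α, Real.log
        (Real.exp 1 * (W.swt Set.univ - ∑ β ∈ Finset.univ.erase α, W.swt (A β)) /
          W.swt (A α)) := by
  have : Nontrivial V := Fintype.one_lt_card_iff_nontrivial.1 (by omega)
  have : Nontrivial (Fin (k + 1)) := Fin.nontrivial_iff_two_le.2 (by omega)
  have hsep : ∀ α β, α ≠ β → D ≤ W.setDist (A α) (A β) := fun α β hαβ =>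
    hD ▸ Nat.sInf_le ⟨α, β, hαβ, rfl⟩
  have hDpos : 0 < D := by
    obtain ⟨α, β, hαβ⟩ := exists_pair_ne (Fin (k + 1))
    obtain ⟨γ, δ, hγδ, hDγδ⟩ : D ∈ {n | ∃ α β, α ≠ β ∧ n = W.setDist (A α) (A β)} :=
      hD ▸ Nat.sInf_mem ⟨_, α, β, hαβ, rfl⟩
    exact hDγδ ▸ (setDist_pos_iff_disjoint (hne γ) (hne δ)).2 (hdisj γ δ hγδ)
  exact nu_rpow_le_of_log_le hne hsep (by simp) hDpos hp (le_ciSup (Finite.bddAbove_range _))
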